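/- arXiv:2006.05152 — 3 statements merged into one kernel-verified Lean document; each statement's English description precedes it below -/
import Mathlib

section
/- Let f : ℝ^d → ℝ be differentiable with L-Lipschitz gradient (‖∇f(u) − ∇f(v)‖ ≤ L‖u − v‖ for all u, v), let β > 0, let ω ∈ ℝ^d, and let Δ ∈ {−1, 1}^d be any sign vector. Then the two-point SPSA gradient estimate satisfies the pointwise norm bound ‖Δ·(f(ω + βΔ) − f(ω − βΔ))/(2β)‖ ≤ d·‖∇f(ω)‖ + (L/2)·β·d^{3/2}, where ‖·‖ is the Euclidean norm. -/
/-!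
After a fraction `t` of the segment from `x` to `y`, the derivative has moved by at most
`L t ‖y - x‖`, so integrating bounds the first-order Taylor remainder by `(L / 2) ‖y - x‖ ^ 2`.
Applied to `x ± v`, this shows that the central difference is `2 f'(x) v` up to `L ‖v‖ ^ 2`. For the
SPSA estimate `v = β Δ`, and a vector with entries in `[-1, 1]` has norm at most `√d`.
-/

section Taylor

variable {E F : Type*} [NormedAddCommGroup E] [NormedSpace ℝ E]
  [NormedAddCommGroup F] [NormedSpace ℝ F]
  {f : E → F} {f' : E → E →L[ℝ] F} {s : Set E} {L : NNReal} {x y v : E}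

theorem norm_image_sub_sub_le_of_lipschitzOnWith_hasFDerivWithinAt (hs : Convex ℝ s)
    (hf : ∀ u ∈ s, HasFDerivWithinAt f (f' u) s u) (hlip : LipschitzOnWith L f' s)
    (hx : x ∈ s) (hy : y ∈ s) :
    ‖f y - f x - f' x (y - x)‖ ≤ L / 2 * ‖y - x‖ ^ 2 := by
  let γ : ℝ → E := AffineMap.lineMap x y
  have hγ : Set.MapsTo γ (Set.Icc 0 1) s := fun t ht ↦ hs.lineMap_mem hx hy ht
  have remainder_deriv : ∀ t ∈ Set.Icc (0 : ℝ) 1, HasDerivWithinAt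
      (fun t ↦ f (γ t) - f x - t • f' x (y - x)) ((f' (γ t) - f' x) (y - x))
      (Set.Icc 0 1) t := by
    intro t ht
    have hfγ := (hf (γ t) (hγ ht)).comp_hasDerivWithinAt t AffineMap.hasDerivWithinAt_lineMap hγ
    exact ((hfγ.sub_const (f x)).fun_sub
      ((hasDerivWithinAt_id t _).smul_const (f' x (y - x)))).congr_deriv (by simp)
  have remainder_deriv_le : ∀ t ∈ Set.Ico (0 : ℝ) 1,
      ‖(f' (γ t) - f' x) (y - x)‖ ≤ L * ‖y - x‖ ^ 2 * t := by
    intro t ht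
    have hγ_sub : ‖γ t - x‖ = t * ‖y - x‖ := by
      simp [γ, AffineMap.lineMap_apply, norm_smul, abs_of_nonneg ht.1]
    calc ‖(f' (γ t) - f' x) (y - x)‖ ≤ ‖f' (γ t) - f' x‖ * ‖y - x‖ :=
          ContinuousLinearMap.le_opNorm _ _
      _ ≤ L * ‖γ t - x‖ * ‖y - x‖ := by
          gcongr
          exact hlip.norm_sub_le (hγ (Set.Ico_subset_Icc_self ht)) hx
      _ = L * ‖y - x‖ ^ 2 * t := by rw [hγ_sub]; ring
  have bound_deriv (t : ℝ) :
      HasDerivAt (fun t ↦ L / 2 * ‖y - x‖ ^ 2 * t ^ 2) (L * ‖y - x‖ ^ 2 * t) t :=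
    ((hasDerivAt_pow 2 t).const_mul _).congr_deriv (by push_cast; ring)
  simpa [γ] using image_norm_le_of_norm_deriv_right_le_deriv_boundary
    (fun t ht ↦ (remainder_deriv t ht).continuousWithinAt)
    (fun t ht ↦ (remainder_deriv t (Set.Ico_subset_Icc_self ht)).mono_of_mem_nhdsWithin
      (Icc_mem_nhdsGE_of_mem ht))
    (by simp [γ]) bound_deriv remainder_deriv_le (Set.right_mem_Icc.mpr zero_le_one)

theorem norm_image_add_sub_image_sub_le_of_lipschitzOnWith_hasFDerivWithinAt (hs : Convex ℝ s)
    (hf : ∀ u ∈ s, HasFDerivWithinAt f (f' u) s u) (hlip : LipschitzOnWith L f' s)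
    (hadd : x + v ∈ s) (hsub : x - v ∈ s) :
    ‖f (x + v) - f (x - v)‖ ≤ 2 * ‖f' x‖ * ‖v‖ + L * ‖v‖ ^ 2 := by
  have hx : x ∈ s := midpoint_sub_add ℝ x v ▸ hs.midpoint_mem hsub hadd
  have forward : ‖f (x + v) - f x - f' x v‖ ≤ L / 2 * ‖v‖ ^ 2 := by
    simpa using norm_image_sub_sub_le_of_lipschitzOnWith_hasFDerivWithinAt hs hf hlip hx hadd
  have backward : ‖f (x - v) - f x + f' x v‖ ≤ L / 2 * ‖v‖ ^ 2 := by
    simpa using norm_image_sub_sub_le_of_lipschitzOnWith_hasFDerivWithinAt hs hf hlip hx hsub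
  calc ‖f (x + v) - f (x - v)‖
      = ‖(2 : ℝ) • f' x v + (f (x + v) - f x - f' x v) - (f (x - v) - f x + f' x v)‖ := by
        congr 1; module
    _ ≤ ‖(2 : ℝ) • f' x v‖ + ‖f (x + v) - f x - f' x v‖ + ‖f (x - v) - f x + f' x v‖ :=
        (norm_sub_le _ _).trans (by gcongr; exact norm_add_le _ _)
    _ ≤ 2 * (‖f' x‖ * ‖v‖) + L / 2 * ‖v‖ ^ 2 + L / 2 * ‖v‖ ^ 2 := by
        rw [norm_smul, Real.norm_ofNat]
        gcongr
        exact (f' x).le_opNorm v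
    _ = 2 * ‖f' x‖ * ‖v‖ + L * ‖v‖ ^ 2 := by ring

end Taylor

section SPSA

/-- The two-point SPSA estimate of the gradient of `f` at `ω`, with step `β` and perturbation `Δ`.
The scalar multiplies `Δ` itself, which agrees with dividing entrywise by `Δ` only for sign
vectors. -/
noncomputable def spsaEstimate {E : Type*} [AddCommGroup E] [Module ℝ E]
    (f : E → ℝ) (β : ℝ) (ω Δ : E) : E :=
  ((f (ω + β • Δ) - f (ω - β • Δ)) / (2 * β)) • Δ

theorem norm_spsaEstimate_le_of_hasFDerivWithinAt {E : Type*} [NormedAddCommGroup E]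
    [NormedSpace ℝ E] {f : E → ℝ} {f' : E → E →L[ℝ] ℝ} {s : Set E} {L : NNReal} {β : ℝ} {ω Δ : E}
    (hs : Convex ℝ s) (hf : ∀ u ∈ s, HasFDerivWithinAt f (f' u) s u)
    (hlip : LipschitzOnWith L f' s) (hβ : 0 < β) (hadd : ω + β • Δ ∈ s) (hsub : ω - β • Δ ∈ s) :
    ‖spsaEstimate f β ω Δ‖ ≤ ‖Δ‖ ^ 2 * ‖f' ω‖ + L / 2 * β * ‖Δ‖ ^ 3 := by
  have hstep : ‖β • Δ‖ = β * ‖Δ‖ := norm_smul_of_nonneg hβ.le Δ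
  calc ‖spsaEstimate f β ω Δ‖
      = ‖f (ω + β • Δ) - f (ω - β • Δ)‖ / (2 * β) * ‖Δ‖ := by
        rw [spsaEstimate, norm_smul, norm_div, Real.norm_of_nonneg (by positivity : 0 ≤ 2 * β)]
    _ ≤ (2 * ‖f' ω‖ * ‖β • Δ‖ + L * ‖β • Δ‖ ^ 2) / (2 * β) * ‖Δ‖ := by
        gcongr
        exact norm_image_add_sub_image_sub_le_of_lipschitzOnWith_hasFDerivWithinAt
          hs hf hlip hadd hsub
    _ = ‖Δ‖ ^ 2 * ‖f' ω‖ + L / 2 * β * ‖Δ‖ ^ 3 := by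
        rw [hstep]
        field_simp

theorem norm_spsaEstimate_le_of_hasGradientWithinAt {E : Type*} [NormedAddCommGroup E]
    [InnerProductSpace ℝ E] [CompleteSpace E] {f : E → ℝ} {f' : E → E} {s : Set E}
    {L : NNReal} {β : ℝ} {ω Δ : E}
    (hs : Convex ℝ s) (hgrad : ∀ u ∈ s, HasGradientWithinAt f (f' u) s u)
    (hlip : LipschitzOnWith L f' s) (hβ : 0 < β) (hadd : ω + β • Δ ∈ s) (hsub : ω - β • Δ ∈ s) :
    ‖spsaEstimate f β ω Δ‖ ≤ ‖Δ‖ ^ 2 * ‖f' ω‖ + L / 2 * β * ‖Δ‖ ^ 3 := by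
  let toDual := InnerProductSpace.toDual ℝ E
  have hlip_dual : LipschitzOnWith L (fun u ↦ toDual (f' u)) s :=
    .of_dist_le_mul fun u hu v hv ↦ (toDual.dist_map _ _).trans_le (hlip.dist_le_mul u hu v hv)
  simpa only [toDual, LinearIsometryEquiv.norm_map] using
    norm_spsaEstimate_le_of_hasFDerivWithinAt hs (fun u hu ↦ (hgrad u hu).hasFDerivWithinAt)
      hlip_dual hβ hadd hsub

theorem norm_le_sqrt_card_of_forall_norm_le_one {𝕜 ι : Type*} [RCLike 𝕜] [Fintype ι]
    {x : EuclideanSpace 𝕜 ι} (hx : ∀ i, ‖x i‖ ≤ 1) : ‖x‖ ≤ √(Fintype.card ι) := by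
  rw [EuclideanSpace.norm_eq]
  gcongr
  simpa using Finset.sum_le_card_nsmul Finset.univ (fun i ↦ ‖x i‖ ^ 2) 1
    fun i _ ↦ pow_le_one₀ (norm_nonneg _) (hx i)

theorem spsa_estimate_pointwise_norm_bound_general {ι : Type*} [Fintype ι]
    {f : EuclideanSpace ℝ ι → ℝ} {f' : EuclideanSpace ℝ ι → EuclideanSpace ℝ ι}
    {s : Set (EuclideanSpace ℝ ι)} {L : NNReal} {β : ℝ} {ω Δ : EuclideanSpace ℝ ι}
    (hs : Convex ℝ s) (hgrad : ∀ u ∈ s, HasGradientWithinAt f (f' u) s u)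
    (hlip : LipschitzOnWith L f' s) (hβ : 0 < β) (hadd : ω + β • Δ ∈ s) (hsub : ω - β • Δ ∈ s)
    (hΔ : ∀ i, |Δ i| ≤ 1) :
    ‖spsaEstimate f β ω Δ‖ ≤
      Fintype.card ι * ‖f' ω‖ + L / 2 * β * (Fintype.card ι : ℝ) ^ ((3 : ℝ) / 2) := by
  have hnorm : ‖Δ‖ ≤ √(Fintype.card ι) := norm_le_sqrt_card_of_forall_norm_le_one hΔ
  calc ‖spsaEstimate f β ω Δ‖ ≤ ‖Δ‖ ^ 2 * ‖f' ω‖ + L / 2 * β * ‖Δ‖ ^ 3 :=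
        norm_spsaEstimate_le_of_hasGradientWithinAt hs hgrad hlip hβ hadd hsub
    _ ≤ √(Fintype.card ι) ^ 2 * ‖f' ω‖ + L / 2 * β * √(Fintype.card ι) ^ 3 := by
        gcongr
    _ = Fintype.card ι * ‖f' ω‖ + L / 2 * β * (Fintype.card ι : ℝ) ^ ((3 : ℝ) / 2) := by
        rw [Real.sq_sqrt (Nat.cast_nonneg _), Real.rpow_div_two_eq_sqrt 3 (Nat.cast_nonneg _),
          Real.rpow_ofNat]

end SPSA

/-- Pointwise norm bound for the two-point SPSA gradient estimate: if `f` is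
differentiable with `L`-Lipschitz gradient `f'`, `β > 0`, and `Δ ∈ {-1,1}^d` is any
sign vector, then
`‖Δ · (f(ω + βΔ) - f(ω - βΔ)) / (2β)‖ ≤ d ‖∇f(ω)‖ + (L/2) β d^{3/2}`. -/
theorem spsa_estimate_pointwise_norm_bound
    (d : ℕ) (f : EuclideanSpace ℝ (Fin d) → ℝ)
    (f' : EuclideanSpace ℝ (Fin d) → EuclideanSpace ℝ (Fin d))
    (hgrad : ∀ u, HasGradientAt f (f' u) u)
    (L : NNReal) (hlip : LipschitzWith L f')
    (β : ℝ) (hβ : 0 < β)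
    (ω Δ : EuclideanSpace ℝ (Fin d))
    (hΔ : ∀ i, Δ i = 1 ∨ Δ i = -1) :
    ‖((f (ω + β • Δ) - f (ω - β • Δ)) / (2 * β)) • Δ‖ ≤
      (d : ℝ) * ‖f' ω‖ + (L : ℝ) / 2 * β * (d : ℝ) ^ ((3 : ℝ) / 2) := by
  have hΔ_le (i : Fin d) : |Δ i| ≤ 1 := by rcases hΔ i with h | h <;> simp [h]
  simpa only [spsaEstimate, Fintype.card_fin] using
    spsa_estimate_pointwise_norm_bound_general convex_univ
      (fun u _ ↦ hasGradientWithinAt_univ.mpr (hgrad u)) hlip.lipschitzOnWith hβ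
      (Set.mem_univ _) (Set.mem_univ _) hΔ_le
end

section
/- (Chung's lemma.) Let {v_n}_{n≥1} be a sequence of nonnegative real numbers, {a_n}_{n≥1} a sequence with a_n ∈ (0, 1] for all n, and {b_n}_{n≥1} a sequence of nonnegative reals, such that v_n ≤ (1 − a_n)·v_{n−1} + b_n for all n ≥ 1. If Σ_{n≥1} a_n = ∞ and b_n / a_n → 0 as n → ∞, then v_n → 0 as n → ∞. -/
open Filter

/-!
Once `b n ≤ a n * m`, the recursion compares `v (n + 1)` with a convex combination of `v n` and `m`,
so the excess `v n - m` is contracted by the factor `1 - a n`. The product of these factors is at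
most `exp (-∑ a i)`, which tends to `0` because `∑ a i` diverges. Hence `limsup v ≤ m` for every `m`
above the limit of `b n / a n`.
-/

section

variable {v a b : ℕ → ℝ} {ℓ m c : ℝ}

theorem tendsto_prod_one_sub_nhds_zero_of_not_summable (ha : ∀ n, a n ∈ Set.Icc (0 : ℝ) 1)
    (hadiv : ¬ Summable a) :
    Tendsto (fun n => ∏ i ∈ Finset.range n, (1 - a i)) atTop (nhds 0) := by
  have hsum : Tendsto (fun n => ∑ i ∈ Finset.range n, a i) atTop atTop :=
    (not_summable_iff_tendsto_nat_atTop_of_nonneg fun n => (ha n).1).1 hadiv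
  have hnonneg : ∀ i, 0 ≤ 1 - a i := fun i => sub_nonneg.2 (ha i).2
  refine squeeze_zero (fun n => Finset.prod_nonneg fun i _ => hnonneg i) (fun n => ?_)
    (Real.tendsto_exp_neg_atTop_nhds_zero.comp hsum)
  calc ∏ i ∈ Finset.range n, (1 - a i)
      ≤ ∏ i ∈ Finset.range n, Real.exp (-a i) :=
        Finset.prod_le_prod (fun i _ => hnonneg i) fun i _ => Real.one_sub_le_exp_neg (a i)
    _ = Real.exp (-∑ i ∈ Finset.range n, a i) := by
        rw [← Real.exp_sum, Finset.sum_neg_distrib]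

theorem eventually_lt_of_le_one_sub_mul_add_mul (ha : ∀ n, a n ∈ Set.Icc (0 : ℝ) 1)
    (hadiv : ¬ Summable a) (hrec : ∀ n, v (n + 1) ≤ (1 - a n) * v n + a n * m) (hmc : m < c) :
    ∀ᶠ n in atTop, v n < c := by
  have hcontract : ∀ n, v (n + 1) - m ≤ (1 - a n) * (v n - m) + 0 := fun n => by
    linarith [hrec n]
  have hexcess : ∀ n, v n - m ≤ (v 0 - m) * ∏ i ∈ Finset.range n, (1 - a i) := fun n => by
    simpa using discrete_gronwall_prod_general (u := fun n => v n - m) (b := fun _ => 0)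
      (fun n _ => hcontract n) (fun n _ => sub_nonneg.2 (ha n).2) n.zero_le
  have hlim : Tendsto (fun n => (v 0 - m) * ∏ i ∈ Finset.range n, (1 - a i)) atTop (nhds 0) := by
    simpa using (tendsto_prod_one_sub_nhds_zero_of_not_summable ha hadiv).const_mul (v 0 - m)
  filter_upwards [hlim.eventually_lt_const (sub_pos.2 hmc)] with n hn
  linarith [hexcess n]

theorem chung_lemma_general (hv : ∀ᶠ n in atTop, ℓ ≤ v n)
    (ha : ∀ᶠ n in atTop, a n ∈ Set.Ioc (0 : ℝ) 1)
    (hrec : ∀ᶠ n in atTop, v (n + 1) ≤ (1 - a n) * v n + b n)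
    (hadiv : ¬ Summable a)
    (hba : Tendsto (fun n => b n / a n) atTop (nhds ℓ)) :
    Tendsto v atTop (nhds ℓ) := by
  refine tendsto_order.2 ⟨fun c hc => hv.mono fun n => hc.trans_le, fun c hc => ?_⟩
  obtain ⟨m, hℓm, hmc⟩ := exists_between hc
  obtain ⟨N, hN⟩ := eventually_atTop.1 ((ha.and hrec).and (hba.eventually_lt_const hℓm))
  have hrec_tail : ∀ n, v (n + 1 + N) ≤ (1 - a (n + N)) * v (n + N) + a (n + N) * m := by
    intro n
    obtain ⟨⟨⟨ha_pos, -⟩, hrec_n⟩, hratio⟩ := hN (n + N) (Nat.le_add_left N n)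
    have hb_le : b (n + N) ≤ a (n + N) * m := ((div_lt_iff₀' ha_pos).1 hratio).le
    rw [Nat.add_right_comm]
    linarith
  have htail : ∀ᶠ n in atTop, v (n + N) < c :=
    eventually_lt_of_le_one_sub_mul_add_mul (v := fun n => v (n + N)) (a := fun n => a (n + N))
      (fun n => Set.Ioc_subset_Icc_self (hN (n + N) (Nat.le_add_left N n)).1.1)
      (mt (summable_nat_add_iff N).1 hadiv) hrec_tail hmc
  rwa [← map_add_atTop_eq_nat N]

end

/-- **Chung's lemma.** If `{v_n}` is a sequence of nonnegative reals, `a_n ∈ (0,1]`,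
`b_n ≥ 0`, and `v_n ≤ (1 - a_n) v_{n-1} + b_n` for all `n ≥ 1`, with `Σ_{n≥1} a_n = ∞`
and `b_n / a_n → 0`, then `v_n → 0`. -/
theorem chung_lemma (v a b : ℕ → ℝ)
    (hv : ∀ n, 0 ≤ v n)
    (ha : ∀ n, 1 ≤ n → a n ∈ Set.Ioc (0 : ℝ) 1)
    (hb : ∀ n, 1 ≤ n → 0 ≤ b n)
    (hrec : ∀ n, 1 ≤ n → v n ≤ (1 - a n) * v (n - 1) + b n)
    (hadiv : ¬ Summable (fun n => a (n + 1)))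
    (hba : Tendsto (fun n => b n / a n) atTop (nhds 0)) :
    Tendsto v atTop (nhds 0) :=
  chung_lemma_general (.of_forall hv) (.of_forall fun n => ha (n + 1) n.succ_pos)
    (.of_forall fun n => hrec (n + 1) n.succ_pos) hadiv (hba.comp (tendsto_add_atTop_nat 1))
end

section
/- (Robbins–Siegmund lemma, simplified form.) Let (Ω, F, P) be a probability space with filtration {F_n}_{n≥0}, and let {V_n}_{n≥0} be a sequence of nonnegative integrable random variables such that V_n is F_n-measurable. Let {a_n}_{n≥1} and {b_n}_{n≥1} be sequences of nonnegative reals with Σ_{n≥1} a_n < ∞ and Σ_{n≥1} b_n < ∞. If E[V_n | F_{n−1}] ≤ (1 + a_n)·V_{n−1} + b_n almost surely for every n ≥ 1, then the sequence {V_n} converges almost surely to a finite nonnegative random variable. -/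
open MeasureTheory Filter

/-! Dividing `V n` by the growth factor `∏ i < n, (1 + a i)` absorbs the multiplicative perturbation
and leaves a nonnegative process whose conditional expectation exceeds its present value by at most
a drift `b n`. If the accumulated drift is bounded by an integrable function, subtracting it gives a
supermartingale bounded below by an integrable function, and Doob's theorem applies. In general,
kill the process as soon as the accumulated drift is about to exceed a level `M`: this happens at a
time known one step ahead, so the killed process satisfies the same recursion with
accumulated drift at most `M`, and almost every path is never killed once `M` is large. -/

section

open scoped Topology

variable {Ω : Type*} {m m0 : MeasurableSpace Ω} {μ : Measure Ω}

lemma stronglyMeasurable_sum_range {ℱ : Filtration ℕ m0} {c : ℕ → Ω → ℝ}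
    (hc : StronglyAdapted ℱ c) {k n : ℕ} (hn : n ≤ k + 1) :
    StronglyMeasurable[ℱ k] (∑ i ∈ Finset.range n, c i) :=
  Finset.stronglyMeasurable_sum _ fun _ hi ↦
    hc.stronglyMeasurable_le (Nat.le_of_lt_succ ((Finset.mem_range.1 hi).trans_le hn))

section Supermartingale

variable {ℱ : Filtration ℕ m0} {f c : ℕ → Ω → ℝ} {g : Ω → ℝ}

lemma integral_norm_le_of_supermartingale_of_le [SigmaFiniteFiltration μ ℱ]
    (hf : Supermartingale f ℱ μ) (hg : Integrable g μ) (hgf : ∀ n, g ≤ᵐ[μ] f n) (n : ℕ) :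
    ∫ ω, ‖f n ω‖ ∂μ ≤ ∫ ω, f 0 ω ∂μ + ∫ ω, (‖g ω‖ - g ω) ∂μ := by
  have hgap : Integrable (fun ω ↦ ‖g ω‖ - g ω) μ := hg.norm.sub hg
  calc ∫ ω, ‖f n ω‖ ∂μ
      ≤ ∫ ω, (f n ω + (‖g ω‖ - g ω)) ∂μ := by
        refine integral_mono_ae (hf.integrable n).norm ((hf.integrable n).add hgap) ?_
        filter_upwards [hgf n] with ω hω
        rw [Real.norm_eq_abs, Real.norm_eq_abs, abs_le]
        constructor <;> linarith [le_abs_self (g ω), neg_abs_le (g ω)]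
    _ = ∫ ω, f n ω ∂μ + ∫ ω, (‖g ω‖ - g ω) ∂μ := integral_add (hf.integrable n) hgap
    _ ≤ ∫ ω, f 0 ω ∂μ + ∫ ω, (‖g ω‖ - g ω) ∂μ := by
        refine add_le_add ?_ le_rfl
        simpa only [setIntegral_univ] using hf.setIntegral_le n.zero_le MeasurableSet.univ

variable [IsFiniteMeasure μ]

lemma ae_exists_tendsto_of_supermartingale_of_le (hf : Supermartingale f ℱ μ)
    (hg : Integrable g μ) (hgf : ∀ n, g ≤ᵐ[μ] f n) :
    ∀ᵐ ω ∂μ, ∃ x, Tendsto (fun n ↦ f n ω) atTop (𝓝 x) := by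
  have hbdd (n : ℕ) : eLpNorm ((-f) n) 1 μ ≤
      (∫ ω, f 0 ω ∂μ + ∫ ω, (‖g ω‖ - g ω) ∂μ).toNNReal := by
    rw [Pi.neg_apply, eLpNorm_neg, eLpNorm_one_eq_lintegral_enorm,
      ← ofReal_integral_norm_eq_lintegral_enorm (hf.integrable n)]
    exact ENNReal.ofReal_le_ofReal (integral_norm_le_of_supermartingale_of_le hf hg hgf n)
  filter_upwards [hf.neg.exists_ae_tendsto_of_bdd hbdd] with ω ⟨x, hx⟩
  exact ⟨-x, by simpa only [Pi.neg_apply, neg_neg] using hx.neg⟩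

lemma supermartingale_sub_sum_range (hf : StronglyAdapted ℱ f) (hfint : ∀ n, Integrable (f n) μ)
    (hc : StronglyAdapted ℱ c) (hcint : ∀ n, Integrable (c n) μ)
    (h : ∀ n, μ[f (n + 1) | ℱ n] ≤ᵐ[μ] f n + c n) :
    Supermartingale (fun n ↦ f n - ∑ i ∈ Finset.range n, c i) ℱ μ := by
  have hsum_int (n : ℕ) : Integrable (∑ i ∈ Finset.range n, c i) μ :=
    integrable_finsetSum' _ fun i _ ↦ hcint i
  refine supermartingale_nat (fun n ↦ (hf n).sub (stronglyMeasurable_sum_range hc n.le_succ))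
    (fun n ↦ (hfint n).sub (hsum_int n)) fun n ↦ ?_
  have hcond := condExp_sub (hfint (n + 1)) (hsum_int (n + 1)) (ℱ n)
  rw [condExp_of_stronglyMeasurable (ℱ.le n) (stronglyMeasurable_sum_range hc le_rfl)
    (hsum_int (n + 1))] at hcond
  filter_upwards [hcond, h n] with ω hω hdrift
  rw [hω]
  simp only [Pi.sub_apply, Pi.add_apply, Finset.sum_range_succ] at hdrift ⊢
  linarith

lemma ae_exists_tendsto_of_condExp_le_add_of_sum_le (hf : StronglyAdapted ℱ f)
    (hfint : ∀ n, Integrable (f n) μ) (hf0 : ∀ n, 0 ≤ᵐ[μ] f n) (hc : StronglyAdapted ℱ c)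
    (hc0 : ∀ n, 0 ≤ c n) (hg : Integrable g μ) (hcg : ∀ n, ∑ i ∈ Finset.range n, c i ≤ᵐ[μ] g)
    (h : ∀ n, μ[f (n + 1) | ℱ n] ≤ᵐ[μ] f n + c n) :
    ∀ᵐ ω ∂μ, ∃ x, Tendsto (fun n ↦ f n ω) atTop (𝓝 x) := by
  have hcint (n : ℕ) : Integrable (c n) μ := by
    refine hg.mono' ((hc n).mono (ℱ.le n)).aestronglyMeasurable ?_
    filter_upwards [hcg (n + 1)] with ω hω
    rw [Real.norm_of_nonneg (hc0 n ω)]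
    exact (Finset.single_le_sum (fun i _ ↦ hc0 i) (Finset.self_mem_range_succ n) ω).trans hω
  have hlower (n : ℕ) : -g ≤ᵐ[μ] f n - ∑ i ∈ Finset.range n, c i := by
    filter_upwards [hf0 n, hcg n] with ω hfω hcω
    simp only [Pi.zero_apply, Pi.neg_apply, Pi.sub_apply] at hfω ⊢
    linarith
  filter_upwards [ae_exists_tendsto_of_supermartingale_of_le
    (supermartingale_sub_sum_range hf hfint hc hcint h) hg.neg hlower, ae_all_iff.2 hcg]
    with ω ⟨x, hx⟩ hω
  have hcsum : Summable (c · ω) := summable_of_sum_range_le (fun i ↦ hc0 i ω) fun n ↦ by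
    simpa only [Finset.sum_apply] using hω n
  refine ⟨x + ∑' i, c i ω, (hx.add hcsum.tendsto_sum_tsum_nat).congr fun n ↦ ?_⟩
  simp only [Pi.sub_apply, Finset.sum_apply, sub_add_cancel]

end Supermartingale

section Killing

variable {ℱ : Filtration ℕ m0} {c : ℕ → Ω → ℝ} {M : ℝ}

/-- The event that the drift `c 0 + ⋯ + c (n - 1)` accumulated before time `n` is at most `M`. It is
used to kill a process with drift `c` before that drift exceeds `M`. -/
def driftLE (c : ℕ → Ω → ℝ) (M : ℝ) (n : ℕ) : Set Ω :=
  {ω | ∑ i ∈ Finset.range n, c i ω ≤ M}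

lemma driftLE_succ_subset (hc0 : ∀ n, 0 ≤ c n) (n : ℕ) : driftLE c M (n + 1) ⊆ driftLE c M n :=
  fun ω hω ↦ (Finset.sum_le_sum_of_subset_of_nonneg (Finset.range_mono n.le_succ)
    fun i _ _ ↦ hc0 i ω).trans hω

lemma measurableSet_driftLE (hc : StronglyAdapted ℱ c) {k n : ℕ} (hn : n ≤ k + 1) :
    MeasurableSet[ℱ k] (driftLE c M n) := by
  have hsum : MeasurableSet[ℱ k] ((∑ i ∈ Finset.range n, c i) ⁻¹' Set.Iic M) :=
    (stronglyMeasurable_sum_range hc hn).measurable measurableSet_Iic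
  simpa only [driftLE, Set.preimage, Set.mem_Iic, Finset.sum_apply] using hsum

lemma sum_indicator_driftLE_le (hc0 : ∀ n, 0 ≤ c n) (hM : 0 ≤ M) (n : ℕ) (ω : Ω) :
    ∑ i ∈ Finset.range n, (driftLE c M (i + 1)).indicator (c i) ω ≤ M := by
  induction n with
  | zero => simpa only [Finset.range_zero, Finset.sum_empty] using hM
  | succ n ih =>
    by_cases hω : ω ∈ driftLE c M (n + 1)
    · exact (Finset.sum_le_sum fun i _ ↦ Set.indicator_le_self' (fun ω _ ↦ hc0 i ω) ω).trans hω
    · rwa [Finset.sum_range_succ, Set.indicator_of_notMem hω, add_zero]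

lemma condExp_indicator_le_add {f g h : Ω → ℝ} {s t : Set Ω} (hg : Integrable g μ)
    (hf0 : 0 ≤ᵐ[μ] f) (ht : MeasurableSet[m] t) (hts : t ⊆ s) (hgf : μ[g | m] ≤ᵐ[μ] f + h) :
    μ[t.indicator g | m] ≤ᵐ[μ] s.indicator f + t.indicator h := by
  filter_upwards [condExp_indicator hg ht, hgf, hf0] with ω hcond hω hfω
  rw [Pi.add_apply] at hω
  rw [hcond, Pi.add_apply]
  by_cases hωt : ω ∈ t
  · simpa only [Set.indicator_of_mem hωt, Set.indicator_of_mem (hts hωt)] using hω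
  · rw [Set.indicator_of_notMem hωt, Set.indicator_of_notMem hωt, add_zero]
    exact Set.indicator_apply_nonneg fun _ ↦ hfω

variable [IsFiniteMeasure μ] {f : ℕ → Ω → ℝ}

lemma ae_exists_tendsto_indicator_driftLE (hf : StronglyAdapted ℱ f)
    (hfint : ∀ n, Integrable (f n) μ) (hf0 : ∀ n, 0 ≤ᵐ[μ] f n) (hc : StronglyAdapted ℱ c)
    (hc0 : ∀ n, 0 ≤ c n) (h : ∀ n, μ[f (n + 1) | ℱ n] ≤ᵐ[μ] f n + c n) (hM : 0 ≤ M) :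
    ∀ᵐ ω ∂μ, ∃ x, Tendsto (fun n ↦ (driftLE c M n).indicator (f n) ω) atTop (𝓝 x) := by
  refine ae_exists_tendsto_of_condExp_le_add_of_sum_le (ℱ := ℱ)
    (c := fun n ↦ (driftLE c M (n + 1)).indicator (c n)) (g := fun _ ↦ M)
    (fun n ↦ (hf n).indicator (measurableSet_driftLE hc n.le_succ))
    (fun n ↦ (hfint n).indicator (ℱ.le n _ (measurableSet_driftLE hc n.le_succ))) (fun n ↦ ?_)
    (fun n ↦ (hc n).indicator (measurableSet_driftLE hc le_rfl))
    (fun n ↦ Set.indicator_nonneg fun ω _ ↦ hc0 n ω) (integrable_const M)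
    (fun n ↦ ae_of_all μ fun ω ↦ ?_)
    fun n ↦ condExp_indicator_le_add (hfint (n + 1)) (hf0 n) (measurableSet_driftLE hc le_rfl)
      (driftLE_succ_subset hc0 n) (h n)
  · filter_upwards [hf0 n] with ω hω using Set.indicator_apply_nonneg fun _ ↦ hω
  · simpa only [Finset.sum_apply] using sum_indicator_driftLE_le hc0 hM n ω

lemma ae_exists_tendsto_of_condExp_le_add (hf : StronglyAdapted ℱ f)
    (hfint : ∀ n, Integrable (f n) μ) (hf0 : ∀ n, 0 ≤ᵐ[μ] f n) (hc : StronglyAdapted ℱ c)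
    (hc0 : ∀ n, 0 ≤ c n) (hcsum : ∀ᵐ ω ∂μ, Summable (c · ω))
    (h : ∀ n, μ[f (n + 1) | ℱ n] ≤ᵐ[μ] f n + c n) :
    ∀ᵐ ω ∂μ, ∃ x, Tendsto (fun n ↦ f n ω) atTop (𝓝 x) := by
  have hkilled (M : ℕ) := ae_exists_tendsto_indicator_driftLE hf hfint hf0 hc hc0 h M.cast_nonneg
  filter_upwards [ae_all_iff.2 hkilled, hcsum] with ω hω hsum
  obtain ⟨M, hM⟩ := exists_nat_ge (∑' i, c i ω)
  have hmem (n : ℕ) : ω ∈ driftLE c M n := (hsum.sum_le_tsum _ fun i _ ↦ hc0 i ω).trans hM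
  simpa only [Set.indicator_of_mem (hmem _)] using hω M

end Killing

section Rescaling

variable {a b f g p : Ω → ℝ}

lemma integrable_div_of_one_le (hg : Integrable g μ) (hp : AEStronglyMeasurable p μ)
    (hp1 : 1 ≤ p) : Integrable (g / p) μ := by
  refine hg.mono (hg.aestronglyMeasurable.div₀ hp) (ae_of_all μ fun ω ↦ ?_)
  rw [Pi.div_apply, norm_div]
  exact div_le_self (norm_nonneg _) ((hp1 ω).trans (le_abs_self _))

lemma condExp_div_of_stronglyMeasurable (hp : StronglyMeasurable[m] p)
    (hgp : Integrable (g / p) μ) (hg : Integrable g μ) : μ[g / p | m] =ᵐ[μ] μ[g | m] / p := by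
  rw [div_eq_mul_inv] at hgp ⊢
  rw [div_eq_mul_inv]
  exact condExp_mul_of_stronglyMeasurable_right hp.inv₀ hgp hg

lemma condExp_div_mul_one_add_le (hm : m ≤ m0) (hp : StronglyMeasurable[m] p)
    (ha : StronglyMeasurable[m] a) (hp1 : 1 ≤ p) (ha0 : 0 ≤ a) (hb0 : 0 ≤ b)
    (hg : Integrable g μ) (h : μ[g | m] ≤ᵐ[μ] (1 + a) * f + b) :
    μ[g / (p * (1 + a)) | m] ≤ᵐ[μ] f / p + b := by
  have hq : StronglyMeasurable[m] (p * (1 + a)) := hp.mul (stronglyMeasurable_const.add ha)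
  have hq1 : 1 ≤ p * (1 + a) := fun ω ↦
    one_le_mul_of_one_le_of_one_le (hp1 ω) (le_add_of_nonneg_right (ha0 ω))
  have hgq : Integrable (g / (p * (1 + a))) μ :=
    integrable_div_of_one_le hg (hq.mono hm).aestronglyMeasurable hq1
  filter_upwards [condExp_div_of_stronglyMeasurable hq hgq hg, h] with ω hcond hω
  have hpω : 0 < p ω := one_pos.trans_le (hp1 ω)
  have haω : 0 < 1 + a ω := add_pos_of_pos_of_nonneg one_pos (ha0 ω)
  have hqω : 1 ≤ p ω * (1 + a ω) := hq1 ω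
  calc (μ[g / (p * (1 + a)) | m]) ω
      = (μ[g | m]) ω / (p ω * (1 + a ω)) := hcond
    _ ≤ ((1 + a ω) * f ω + b ω) / (p ω * (1 + a ω)) := by gcongr; exact hω
    _ = f ω / p ω + b ω / (p ω * (1 + a ω)) := by field_simp
    _ ≤ f ω / p ω + b ω := by gcongr; exact div_le_self (hb0 ω) hqω

end Rescaling

variable [IsFiniteMeasure μ] {ℱ : Filtration ℕ m0} {V a b : ℕ → Ω → ℝ}

lemma ae_exists_tendsto_of_condExp_le_one_add_mul_add (hV : StronglyAdapted ℱ V)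
    (hVint : ∀ n, Integrable (V n) μ) (hV0 : ∀ n, 0 ≤ᵐ[μ] V n) (ha : StronglyAdapted ℱ a)
    (ha0 : ∀ n, 0 ≤ a n) (hasum : ∀ᵐ ω ∂μ, Summable (a · ω)) (hb : StronglyAdapted ℱ b)
    (hb0 : ∀ n, 0 ≤ b n) (hbsum : ∀ᵐ ω ∂μ, Summable (b · ω))
    (h : ∀ n, μ[V (n + 1) | ℱ n] ≤ᵐ[μ] (1 + a n) * V n + b n) :
    ∀ᵐ ω ∂μ, ∃ x, Tendsto (fun n ↦ V n ω) atTop (𝓝 x) := by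
  let p (n : ℕ) : Ω → ℝ := fun ω ↦ ∏ i ∈ Finset.range n, (1 + a i ω)
  have hp (n : ℕ) : StronglyMeasurable[ℱ n] (p n) :=
    Finset.stronglyMeasurable_fun_prod _ fun i hi ↦
      stronglyMeasurable_const.add (ha.stronglyMeasurable_le (Finset.mem_range.1 hi).le)
  have hp1 (n : ℕ) : 1 ≤ p n := fun ω ↦
    Finset.one_le_prod fun i _ ↦ le_add_of_nonneg_right (ha0 i ω)
  have hp_succ (n : ℕ) : p (n + 1) = p n * (1 + a n) :=
    funext fun ω ↦ Finset.prod_range_succ _ _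
  have hratio : ∀ᵐ ω ∂μ, ∃ x, Tendsto (fun n ↦ (V n / p n) ω) atTop (𝓝 x) := by
    refine ae_exists_tendsto_of_condExp_le_add (fun n ↦ (hV n).div (hp n))
      (fun n ↦ integrable_div_of_one_le (hVint n) ((hp n).mono (ℱ.le n)).aestronglyMeasurable
        (hp1 n)) (fun n ↦ ?_) hb hb0 hbsum fun n ↦ ?_
    · filter_upwards [hV0 n] with ω hω using div_nonneg hω (zero_le_one.trans (hp1 n ω))
    · rw [hp_succ]
      exact condExp_div_mul_one_add_le (ℱ.le n) (hp n) (ha n) (hp1 n) (ha0 n) (hb0 n)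
        (hVint (n + 1)) (h n)
  filter_upwards [hratio, hasum] with ω ⟨x, hx⟩ hsum
  have hplim : Tendsto (fun n ↦ p n ω) atTop (𝓝 (∏' i, (1 + a i ω))) :=
    (Real.multipliable_one_add_of_summable hsum).tendsto_prod_tprod_nat
  exact ⟨_, (hx.mul hplim).congr fun n ↦
    div_mul_cancel₀ _ (one_pos.trans_le (hp1 n ω)).ne'⟩

theorem robbins_siegmund_simplified_general (hV : StronglyAdapted ℱ V)
    (hVint : ∀ n, Integrable (V n) μ) (hV0 : ∀ n, 0 ≤ᵐ[μ] V n)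
    (ha : StronglyAdapted ℱ a) (hasum : ∀ᵐ ω ∂μ, Summable (a · ω))
    (hb : StronglyAdapted ℱ b) (hbsum : ∀ᵐ ω ∂μ, Summable (b · ω))
    (h : ∀ n, μ[V (n + 1) | ℱ n] ≤ᵐ[μ] (1 + a n) * V n + b n) :
    ∀ᵐ ω ∂μ, ∃ x, 0 ≤ x ∧ Tendsto (fun n ↦ V n ω) atTop (𝓝 x) := by
  have habs (n : ℕ) : μ[V (n + 1) | ℱ n] ≤ᵐ[μ] (1 + |a n|) * V n + |b n| := by
    filter_upwards [h n, hV0 n] with ω hω hVω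
    refine hω.trans (add_le_add (mul_le_mul_of_nonneg_right ?_ hVω) (le_abs_self (b n ω)))
    exact add_le_add_right (le_abs_self (a n ω)) 1
  filter_upwards [ae_exists_tendsto_of_condExp_le_one_add_mul_add hV hVint hV0 ha.norm
    (fun n ↦ abs_nonneg (a n)) (hasum.mono fun _ ↦ Summable.abs) hb.norm
    (fun n ↦ abs_nonneg (b n)) (hbsum.mono fun _ ↦ Summable.abs) habs, ae_all_iff.2 hV0]
    with ω ⟨x, hx⟩ hω
  exact ⟨x, ge_of_tendsto' hx hω, hx⟩

end

/-- **Robbins–Siegmund lemma (simplified form).** Let `{V_n}` be nonnegative integrable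
random variables adapted to a filtration `{F_n}`, and let `{a_n}`, `{b_n}` be
nonnegative summable sequences of reals. If
`E[V_n | F_{n-1}] ≤ (1 + a_n) V_{n-1} + b_n` almost surely for every `n ≥ 1`, then
`{V_n}` converges almost surely to a finite nonnegative random variable. -/
theorem robbins_siegmund_simplified
    {Ω : Type*} {m0 : MeasurableSpace Ω} {P : Measure Ω} [IsProbabilityMeasure P]
    (F : Filtration ℕ m0)
    (V : ℕ → Ω → ℝ)
    (hadapted : ∀ n, StronglyMeasurable[F n] (V n))
    (hnonneg : ∀ n ω, 0 ≤ V n ω)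
    (hint : ∀ n, Integrable (V n) P)
    (a b : ℕ → ℝ)
    (ha : ∀ n, 0 ≤ a n) (hb : ∀ n, 0 ≤ b n)
    (hasum : Summable (fun n => a (n + 1)))
    (hbsum : Summable (fun n => b (n + 1)))
    (hrec : ∀ n, 1 ≤ n →
      ∀ᵐ ω ∂P, (P[V n | F (n - 1)]) ω ≤ (1 + a n) * V (n - 1) ω + b n) :
    ∀ᵐ ω ∂P, ∃ c : ℝ, 0 ≤ c ∧ Tendsto (fun n => V n ω) atTop (nhds c) :=
  robbins_siegmund_simplified_general hadapted hint (fun n ↦ ae_of_all P (hnonneg n))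
    (stronglyAdapted_const' F fun n ↦ a (n + 1)) (ae_of_all P fun _ ↦ hasum)
    (stronglyAdapted_const' F fun n ↦ b (n + 1)) (ae_of_all P fun _ ↦ hbsum)
    fun n ↦ hrec (n + 1) n.succ_pos
end
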